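/- arXiv:2403.12725 — 11 statements merged into one kernel-verified Lean document; each statement's English description precedes it below -/
import Mathlib

section
/- Let f be a discrete Morse function on an abstract simplicial complex K. Then for every simplex σ ∈ K it is impossible that both of the following hold: there exists β ∈ K with σ ⋖ β and f(β) ≤ f(σ), and there exists α ∈ K with α ⋖ σ and f(α) ≥ f(σ). Consequently, every non-critical simplex of K satisfies exactly one of the two exceptional conditions. -/
/-- An abstract simplicial complex on a vertex type `V`: a set of nonempty finite
subsets (simplices) closed under passing to nonempty subsets. -/
def IsComplex {V : Type*} (K : Set (Finset V)) : Prop :=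
  (∀ σ ∈ K, σ.Nonempty) ∧ ∀ σ ∈ K, ∀ τ : Finset V, τ ⊆ σ → τ.Nonempty → τ ∈ K

/-- `α ⋖ β` : `α` is a codimension-one face of `β`. -/
def CodimOneFace {V : Type*} (a b : Finset V) : Prop :=
  a ⊆ b ∧ b.card = a.card + 1

/-- A discrete Morse function on `K`: for every simplex `σ ∈ K`, at most one
codimension-one coface with no larger value, and at most one codimension-one face
with no smaller value. -/
def IsDiscreteMorse {V : Type*} (K : Set (Finset V)) (f : Finset V → ℝ) : Prop :=
  ∀ σ ∈ K,
    {β | β ∈ K ∧ CodimOneFace σ β ∧ f β ≤ f σ}.Subsingleton ∧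
    {a | a ∈ K ∧ CodimOneFace a σ ∧ f σ ≤ f a}.Subsingleton

/-- A simplex `σ` is critical for `f` if both exceptional sets are empty. -/
def IsCriticalSimplex {V : Type*} (K : Set (Finset V)) (f : Finset V → ℝ)
    (σ : Finset V) : Prop :=
  σ ∈ K ∧
    {β | β ∈ K ∧ CodimOneFace σ β ∧ f β ≤ f σ} = ∅ ∧
    {a | a ∈ K ∧ CodimOneFace a σ ∧ f σ ≤ f a} = ∅

/-- A discrete vector field on `K`: a set of pairs `(α, β)` of simplices of `K`
with `α ⋖ β` such that each simplex belongs to at most one pair. -/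
def IsDVF {V : Type*} (K : Set (Finset V)) (W : Set (Finset V × Finset V)) : Prop :=
  (∀ p ∈ W, p.1 ∈ K ∧ p.2 ∈ K ∧ CodimOneFace p.1 p.2) ∧
  ∀ σ ∈ K, {p | p ∈ W ∧ (p.1 = σ ∨ p.2 = σ)}.Subsingleton

/-- The gradient vector field of a discrete Morse function `f` on `K`. -/
def gradVF {V : Type*} (K : Set (Finset V)) (f : Finset V → ℝ) :
    Set (Finset V × Finset V) :=
  {p | p.1 ∈ K ∧ p.2 ∈ K ∧ CodimOneFace p.1 p.2 ∧ f p.2 ≤ f p.1}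

/-- A `V`-path `α_0, β_0, α_1, …, β_{r-1}, α_r` for a discrete vector field `W`. -/
def IsVPath {V : Type*} (K : Set (Finset V)) (W : Set (Finset V × Finset V)) {r : ℕ}
    (a : Fin (r + 1) → Finset V) (b : Fin r → Finset V) : Prop :=
  (∀ i, a i ∈ K) ∧ (∀ i, b i ∈ K) ∧
  ∀ i : Fin r, (a i.castSucc, b i) ∈ W ∧ CodimOneFace (a i.succ) (b i) ∧
    a i.succ ≠ a i.castSucc

/-- `W` admits no nontrivial closed `V`-path. -/
def NoClosedVPath {V : Type*} (K : Set (Finset V))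
    (W : Set (Finset V × Finset V)) : Prop :=
  ∀ r : ℕ, 0 < r → ∀ a : Fin (r + 1) → Finset V, ∀ b : Fin r → Finset V,
    IsVPath K W a b → a (Fin.last r) ≠ a 0

/-- for a discrete Morse function, no simplex satisfies both exceptional
conditions; consequently every non-critical simplex satisfies exactly one of them. -/
theorem discreteMorse_not_both_exceptional {V : Type*} (K : Set (Finset V))
    (hK : IsComplex K) (f : Finset V → ℝ) (hf : IsDiscreteMorse K f) :
    (∀ σ ∈ K, ¬ ((∃ β ∈ K, CodimOneFace σ β ∧ f β ≤ f σ) ∧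
        (∃ a ∈ K, CodimOneFace a σ ∧ f σ ≤ f a))) ∧
    (∀ σ ∈ K, ¬ IsCriticalSimplex K f σ →
      Xor' (∃ β ∈ K, CodimOneFace σ β ∧ f β ≤ f σ)
        (∃ a ∈ K, CodimOneFace a σ ∧ f σ ≤ f a)) := by
  classical
  have key : ∀ σ ∈ K, ¬ ((∃ β ∈ K, CodimOneFace σ β ∧ f β ≤ f σ) ∧
        (∃ a ∈ K, CodimOneFace a σ ∧ f σ ≤ f a)) := by
    rintro σ hσ ⟨⟨β, hβ, ⟨hσβ, cβ⟩, h1⟩, ⟨a, ha, ⟨haσ, cσ⟩, h2⟩⟩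
    obtain ⟨x, hxσ, hxa⟩ := Finset.exists_mem_notMem_of_card_lt_card
      (show a.card < σ.card by omega)
    have hsub : a ⊆ β.erase x := fun y hy =>
      Finset.mem_erase.2 ⟨fun h => hxa (h ▸ hy), hσβ (haσ hy)⟩
    have hcard : (β.erase x).card + 1 = β.card := Finset.card_erase_add_one (hσβ hxσ)
    have hτ : β.erase x ∈ K :=
      hK.2 β hβ _ (Finset.erase_subset _ _) ((hK.1 a ha).mono hsub)
    have hne : β.erase x ≠ σ := fun h => by
      rw [← h] at hxσ
      exact Finset.notMem_erase x β hxσ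
    have h3 : f a < f (β.erase x) := by
      by_contra h
      exact hne ((hf a ha).1 ⟨hτ, ⟨hsub, by omega⟩, not_lt.1 h⟩ ⟨hσ, ⟨haσ, cσ⟩, h2⟩)
    have h4 : f (β.erase x) < f β := by
      by_contra h
      exact hne ((hf β hβ).2 ⟨hτ, ⟨Finset.erase_subset _ _, by omega⟩, not_lt.1 h⟩
        ⟨hσ, ⟨hσβ, cβ⟩, h1⟩)
    linarith
  refine ⟨key, fun σ hσ hc => ?_⟩
  have hk := key σ hσ
  by_cases hA : ∃ β ∈ K, CodimOneFace σ β ∧ f β ≤ f σ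
  · exact Or.inl ⟨hA, fun hB => hk ⟨hA, hB⟩⟩
  · refine Or.inr ⟨?_, hA⟩
    by_contra hB
    refine hc ⟨hσ, ?_, ?_⟩
    · exact Set.eq_empty_iff_forall_notMem.2 fun β h => hA ⟨β, h.1, h.2⟩
    · exact Set.eq_empty_iff_forall_notMem.2 fun a h => hB ⟨a, h.1, h.2⟩
end

section
/- Let f be a discrete Morse function on an abstract simplicial complex K. Then V_f = {(α, β) : α ⋖ β and f(β) ≤ f(α)} is a discrete vector field on K, i.e., each simplex of K belongs to at most one pair of V_f; moreover, a simplex σ ∈ K is critical for f if and only if σ belongs to no pair of V_f. -/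
/-- A simplex cannot have both an exceptional face and an exceptional coface. -/
lemma morse_exclusion {V : Type*} (K : Set (Finset V))
    (hK : IsComplex K) (f : Finset V → ℝ) (hf : IsDiscreteMorse K f)
    {a s b : Finset V} (ha : a ∈ K) (hs : s ∈ K) (hb : b ∈ K)
    (has : CodimOneFace a s) (hsb : CodimOneFace s b)
    (h1 : f s ≤ f a) (h2 : f b ≤ f s) : False := by
  classical
  obtain ⟨has, cas⟩ := has
  obtain ⟨hsb, csb⟩ := hsb
  have hc : (b \ s).card = 1 := by
    rw [Finset.card_sdiff_of_subset hsb]; omega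
  obtain ⟨y, hy⟩ := Finset.card_eq_one.mp hc
  have hyb : y ∈ b \ s := by rw [hy]; simp
  rw [Finset.mem_sdiff] at hyb
  have hya : y ∉ a := fun h => hyb.2 (has h)
  have hct : (insert y a).card = a.card + 1 := Finset.card_insert_of_notMem hya
  have htb : insert y a ⊆ b := Finset.insert_subset hyb.1 (has.trans hsb)
  have htK : insert y a ∈ K := hK.2 b hb _ htb (Finset.insert_nonempty _ _)
  have hne : insert y a ≠ s := fun h => hyb.2 (h ▸ Finset.mem_insert_self y a)
  rcases le_total (f (insert y a)) (f a) with h | h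
  · exact hne ((hf a ha).1 ⟨htK, ⟨Finset.subset_insert _ _, hct⟩, h⟩ ⟨hs, ⟨has, cas⟩, h1⟩)
  · exact hne ((hf b hb).2 ⟨htK, ⟨htb, by omega⟩, h2.trans (h1.trans h)⟩
      ⟨hs, ⟨hsb, csb⟩, h2⟩)

/-- the gradient vector field of a discrete Morse function is a discrete
vector field, and a simplex is critical iff it belongs to no pair of it. -/
theorem gradVF_isDVF_and_critical_iff {V : Type*} (K : Set (Finset V))
    (hK : IsComplex K) (f : Finset V → ℝ) (hf : IsDiscreteMorse K f) :
    IsDVF K (gradVF K f) ∧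
    ∀ σ ∈ K, (IsCriticalSimplex K f σ ↔
      ∀ p ∈ gradVF K f, p.1 ≠ σ ∧ p.2 ≠ σ) := by
  refine ⟨⟨fun p hp => ⟨hp.1, hp.2.1, hp.2.2.1⟩, ?_⟩, ?_⟩
  · rintro s hs ⟨a, b⟩ ⟨⟨ha, hb, hab, h⟩, h1⟩ ⟨c, d⟩ ⟨⟨hc, hd, hcd, h'⟩, h2⟩
    dsimp only at *
    rcases h1 with rfl | rfl <;> rcases h2 with rfl | rfl
    · rw [(hf _ hs).1 ⟨hb, hab, h⟩ ⟨hd, hcd, h'⟩]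
    · exact (morse_exclusion K hK f hf hc hs hb hcd hab h' h).elim
    · exact (morse_exclusion K hK f hf ha hs hd hab hcd h h').elim
    · rw [(hf _ hs).2 ⟨ha, hab, h⟩ ⟨hc, hcd, h'⟩]
  · intro s hs
    constructor
    · rintro ⟨-, h1, h2⟩ ⟨a, b⟩ ⟨ha, hb, hab, h⟩
      constructor
      · rintro rfl
        exact Set.eq_empty_iff_forall_notMem.mp h1 b ⟨hb, hab, h⟩
      · rintro rfl
        exact Set.eq_empty_iff_forall_notMem.mp h2 a ⟨ha, hab, h⟩
    · intro H
      refine ⟨hs, Set.eq_empty_iff_forall_notMem.mpr ?_, Set.eq_empty_iff_forall_notMem.mpr ?_⟩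
      · rintro b ⟨hb, hab, h⟩
        exact (H (s, b) ⟨hs, hb, hab, h⟩).1 rfl
      · rintro a ⟨ha, hab, h⟩
        exact (H (a, s) ⟨ha, hs, hab, h⟩).2 rfl
end

section
/- (Forman, Theorem 3.4) Let f be a discrete Morse function on an abstract simplicial complex K with gradient vector field V_f. Suppose α_0, β_0, α_1, β_1, …, β_{r−1}, α_r are simplices of K with α_i ⋖ β_i, α_{i+1} ⋖ β_i, and α_i ≠ α_{i+1} for all 0 ≤ i ≤ r−1. Then (α_i, β_i) ∈ V_f for all i (i.e., the sequence is a V_f-path) if and only if f(α_0) ≥ f(β_0) > f(α_1) ≥ f(β_1) > ⋯ ≥ f(β_{r−1}) > f(α_r). -/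
/-- Forman, Theorem 3.4: a sequence of simplices with
`α_i ⋖ β_i`, `α_{i+1} ⋖ β_i` and `α_i ≠ α_{i+1}` is a `V_f`-path iff
`f(α_0) ≥ f(β_0) > f(α_1) ≥ f(β_1) > ⋯ ≥ f(β_{r-1}) > f(α_r)`. -/
theorem gradVF_path_iff_decreasing {V : Type*} (K : Set (Finset V))
    (hK : IsComplex K) (f : Finset V → ℝ) (hf : IsDiscreteMorse K f) (r : ℕ)
    (a : Fin (r + 1) → Finset V) (b : Fin r → Finset V)
    (ha : ∀ i, a i ∈ K) (hb : ∀ i, b i ∈ K)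
    (hab : ∀ i : Fin r, CodimOneFace (a i.castSucc) (b i))
    (hab' : ∀ i : Fin r, CodimOneFace (a i.succ) (b i))
    (hne : ∀ i : Fin r, a i.succ ≠ a i.castSucc) :
    (∀ i : Fin r, (a i.castSucc, b i) ∈ gradVF K f) ↔
    (∀ i : Fin r, f (b i) ≤ f (a i.castSucc) ∧ f (a i.succ) < f (b i)) := by
  constructor
  · intro h i
    have h1 : f (b i) ≤ f (a i.castSucc) := (h i).2.2.2
    refine ⟨h1, ?_⟩
    by_contra hlt
    exact hne i ((hf (b i) (hb i)).2 ⟨ha _, hab' i, not_lt.mp hlt⟩ ⟨ha _, hab i, h1⟩)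
  · intro h i
    exact ⟨ha _, hb i, hab i, (h i).1⟩
end

section
/- Let f be a discrete Morse function on an abstract simplicial complex K. Then the gradient vector field V_f = {(α, β) : α ⋖ β and f(β) ≤ f(α)} admits no nontrivial closed V-path. -/
/-- the gradient vector field of a discrete Morse function admits no
nontrivial closed `V`-path. -/
theorem gradVF_noClosedVPath {V : Type*} (K : Set (Finset V))
    (hK : IsComplex K) (f : Finset V → ℝ) (hf : IsDiscreteMorse K f) :
    NoClosedVPath K (gradVF K f) := by
  intro r hr a b hp hclosed
  obtain ⟨ha, hb, hstep⟩ := hp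
  -- each step strictly decreases `f`
  have hanti : StrictAnti (fun i => f (a i)) := by
    rw [Fin.strictAnti_iff_succ_lt]
    intro i
    obtain ⟨⟨h1, h2, h3, h4⟩, h5, h6⟩ := hstep i
    have hlt : f (a i.succ) < f (b i) := by
      by_contra hge
      exact h6 ((hf (b i) h2).2 ⟨ha _, h5, not_lt.mp hge⟩ ⟨h1, h3, h4⟩)
    exact lt_of_lt_of_le hlt h4
  have hlast : (0 : Fin (r + 1)) < Fin.last r := by
    rw [Fin.lt_def]
    simpa using hr
  have hcon := hanti hlast
  simp only [hclosed, lt_self_iff_false] at hcon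
end

section
/- (Forman, Theorem 3.9) Let V be a discrete vector field on a finite abstract simplicial complex K. Then V is the gradient vector field of some discrete Morse function on K — i.e., there exists a discrete Morse function f on K with V = {(α, β) : α ⋖ β and f(β) ≤ f(α)} — if and only if V admits no nontrivial closed V-path. -/
/-- One step of a `V`-path. -/
def VStep {V : Type*} (K : Set (Finset V)) (W : Set (Finset V × Finset V))
    (a c : Finset V) : Prop :=
  ∃ b, (a, b) ∈ W ∧ c ∈ K ∧ CodimOneFace c b ∧ c ≠ a

theorem VStep.exists_seq {V : Type*} {K : Set (Finset V)} {W : Set (Finset V × Finset V)}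
    {a c : Finset V} (h : Relation.TransGen (VStep K W) a c) :
    ∃ r : ℕ, 0 < r ∧ ∃ s t : ℕ → Finset V, s 0 = a ∧ s r = c ∧
      ∀ i < r, (s i, t i) ∈ W ∧ s (i + 1) ∈ K ∧ CodimOneFace (s (i + 1)) (t i) ∧
        s (i + 1) ≠ s i := by
  induction h using Relation.TransGen.head_induction_on with
  | single h =>
    rename_i a
    obtain ⟨b, h⟩ := h
    refine ⟨1, one_pos, fun n => Nat.casesOn n a (fun _ => c), fun _ => b, rfl, rfl, ?_⟩
    intro i hi
    obtain rfl : i = 0 := by omega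
    exact h
  | head h _ ih =>
    rename_i a d _
    obtain ⟨b, h⟩ := h
    obtain ⟨r, hr, s, t, h0, h1, hs⟩ := ih
    subst h0
    refine ⟨r + 1, by omega, fun n => Nat.casesOn n a s, fun n => Nat.casesOn n b t,
      rfl, h1, ?_⟩
    intro i hi
    cases i with
    | zero => exact h
    | succ i => exact hs i (by omega)

theorem VStep.acyclic {V : Type*} {K : Set (Finset V)} {W : Set (Finset V × Finset V)}
    (hW : IsDVF K W) (h : NoClosedVPath K W) (a : Finset V) :
    ¬ Relation.TransGen (VStep K W) a a := by
  intro hc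
  obtain ⟨r, hr, s, t, h0, h1, hs⟩ := VStep.exists_seq hc
  refine h r hr (fun i => s i) (fun i => t i) ⟨?_, ?_, ?_⟩ (by simp [h0, h1])
  · intro i
    rcases Nat.lt_or_ge i.1 r with hi | hi
    · exact (hW.1 _ (hs i.1 hi).1).1
    · have h2 : i.1 = r := by omega
      show s i.1 ∈ K
      rw [h2, h1, ← h0]
      exact (hW.1 _ (hs 0 hr).1).1
  · intro i
    exact (hW.1 _ (hs i.1 i.2).1).2.1
  · intro i
    have := hs i.1 i.2
    exact ⟨this.1, this.2.2⟩

/-- Number of simplices reachable from `a`. -/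
noncomputable def vHeight {V : Type*} (K : Set (Finset V)) (W : Set (Finset V × Finset V))
    (a : Finset V) : ℕ :=
  {c | c ∈ K ∧ Relation.TransGen (VStep K W) a c}.ncard

theorem vHeight_lt {V : Type*} {K : Set (Finset V)} {W : Set (Finset V × Finset V)}
    (hfin : K.Finite) (hW : IsDVF K W) (h : NoClosedVPath K W) {a c : Finset V}
    (hac : VStep K W a c) : vHeight K W c < vHeight K W a := by
  apply Set.ncard_lt_ncard _ (hfin.subset fun x hx => hx.1)
  refine ⟨fun x hx => ⟨hx.1, Relation.TransGen.head hac hx.2⟩, fun hsub => ?_⟩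
  have hc : c ∈ K := hac.choose_spec.2.1
  exact VStep.acyclic hW h c (hsub ⟨hc, .single hac⟩).2

theorem vHeight_lt_card {V : Type*} {K : Set (Finset V)} {W : Set (Finset V × Finset V)}
    (hfin : K.Finite) (a : Finset V) : vHeight K W a < K.ncard + 1 :=
  Nat.lt_succ_of_le (Set.ncard_le_ncard (fun _ hx => hx.1) hfin)

/-- The value before collapsing pairs. -/
noncomputable def vVal {V : Type*} (K : Set (Finset V)) (W : Set (Finset V × Finset V))
    (a : Finset V) : ℕ :=
  a.card * (K.ncard + 1) + vHeight K W a

open Classical in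
/-- The discrete Morse function. -/
noncomputable def vMorse {V : Type*} (K : Set (Finset V)) (W : Set (Finset V × Finset V))
    (b : Finset V) : ℕ :=
  if h : ∃ a, (a, b) ∈ W then vVal K W h.choose else vVal K W b

theorem vMorse_iff {V : Type*} {K : Set (Finset V)} {W : Set (Finset V × Finset V)}
    (hfin : K.Finite) (hW : IsDVF K W) (h : NoClosedVPath K W) {a b : Finset V}
    (ha : a ∈ K) (hb : b ∈ K) (hab : CodimOneFace a b) :
    vMorse K W b ≤ vMorse K W a ↔ (a, b) ∈ W := by
  have key : ∀ x y, (x, y) ∈ W → vMorse K W y = vVal K W x := by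
    intro x y hxy
    have hex : ∃ a, (a, y) ∈ W := ⟨x, hxy⟩
    have := hW.2 y (hW.1 _ hxy).2.1 ⟨hxy, Or.inr rfl⟩ ⟨hex.choose_spec, Or.inr rfl⟩
    rw [vMorse, dif_pos hex, ← (Prod.mk.inj this).1]
  have key2 : ∀ y, (¬ ∃ x, (x, y) ∈ W) → vMorse K W y = vVal K W y := by
    intro y hy
    rw [vMorse, dif_neg hy]
  have hlt : ∀ x y : Finset V, x.card < y.card → vVal K W x < vVal K W y := by
    intro x y hxy
    have := vHeight_lt_card (W := W) hfin x
    unfold vVal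
    have h2 := Nat.mul_le_mul_right (K.ncard + 1) (Nat.succ_le_of_lt hxy)
    rw [Nat.succ_mul] at h2
    omega
  have hle : vMorse K W a ≤ vVal K W a := by
    by_cases hx : ∃ x, (x, a) ∈ W
    · obtain ⟨x, hx⟩ := hx
      rw [key x a hx]
      exact (hlt x a (by have := (hW.1 _ hx).2.2.2; simp at this; omega)).le
    · exact (key2 a hx).le
  constructor
  · intro hba
    by_contra hn
    by_cases hc : ∃ c, (c, b) ∈ W
    · obtain ⟨c, hc⟩ := hc
      rw [key c b hc] at hba
      have hne : a ≠ c := by rintro rfl; exact hn hc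
      have h1 := vHeight_lt hfin hW h (a := c) (c := a) ⟨b, hc, ha, hab, hne⟩
      have h2 : b.card = c.card + 1 := (hW.1 _ hc).2.2.2
      have h3 : c.card = a.card := by have := hab.2; omega
      have : vVal K W a < vVal K W c := by
        unfold vVal; rw [h3]; omega
      omega
    · rw [key2 b hc] at hba
      have := hlt a b (by have := hab.2; omega)
      omega
  · intro hab'
    rw [key a b hab', key2 a]
    rintro ⟨x, hx⟩
    have := hW.2 a ha ⟨hab', Or.inl rfl⟩ ⟨hx, Or.inr rfl⟩
    have h2 := (Prod.mk.inj this).2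
    have := hab.2
    rw [h2] at this
    omega

/-- Forman, Theorem 3.9: a discrete vector field on a finite complex
is the gradient vector field of some discrete Morse function iff it admits no
nontrivial closed `V`-path. -/
theorem isGradient_iff_noClosedVPath {V : Type*} (K : Set (Finset V))
    (hK : IsComplex K) (hfin : K.Finite)
    (W : Set (Finset V × Finset V)) (hW : IsDVF K W) :
    (∃ f : Finset V → ℝ, IsDiscreteMorse K f ∧ W = gradVF K f) ↔
      NoClosedVPath K W := by
  constructor
  · rintro ⟨f, hf, rfl⟩ r hr a b ⟨ha, hb, hp⟩ heq
    have hdec : StrictAnti (fun i => f (a i)) := by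
      rw [Fin.strictAnti_iff_succ_lt]
      intro i
      obtain ⟨⟨h1, h2, h3, h4⟩, h5, h6⟩ := hp i
      by_contra hcon
      simp only [not_lt] at hcon h4
      exact h6 ((hf _ (hb i)).2 ⟨ha _, h5, h4.trans hcon⟩ ⟨h1, h3, h4⟩)
    have := hdec (show (0 : Fin (r + 1)) < Fin.last r from hr)
    simp [heq] at this
  · intro h
    refine ⟨fun s => (vMorse K W s : ℝ), ?_, ?_⟩
    · intro σ hσ
      constructor
      · rintro x ⟨hx, hx1, hx2⟩ y ⟨hy, hy1, hy2⟩
        have h1 := (vMorse_iff hfin hW h hσ hx hx1).1 (Nat.cast_le.1 hx2)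
        have h2 := (vMorse_iff hfin hW h hσ hy hy1).1 (Nat.cast_le.1 hy2)
        exact (Prod.mk.inj (hW.2 σ hσ ⟨h1, Or.inl rfl⟩ ⟨h2, Or.inl rfl⟩)).2
      · rintro x ⟨hx, hx1, hx2⟩ y ⟨hy, hy1, hy2⟩
        have h1 := (vMorse_iff hfin hW h hx hσ hx1).1 (Nat.cast_le.1 hx2)
        have h2 := (vMorse_iff hfin hW h hy hσ hy1).1 (Nat.cast_le.1 hy2)
        exact (Prod.mk.inj (hW.2 σ hσ ⟨h1, Or.inr rfl⟩ ⟨h2, Or.inr rfl⟩)).1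
    · ext ⟨x, y⟩
      constructor
      · intro hxy
        obtain ⟨h1, h2, h3⟩ := hW.1 _ hxy
        refine ⟨h1, h2, h3, ?_⟩
        exact Nat.cast_le.2 ((vMorse_iff hfin hW h h1 h2 h3).2 hxy)
      · rintro ⟨h1, h2, h3, h4⟩
        exact (vMorse_iff hfin hW h h1 h2 h3).1 (Nat.cast_le.1 h4)
end

section
/- (Forman, Theorem 6.2) Let V be a discrete vector field on a finite abstract simplicial complex K. Then V admits a nontrivial closed V-path if and only if the modified Hasse diagram of (K, V) contains a nontrivial closed directed path, i.e., a directed cycle of positive length. -/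
/-- Directed edge of the modified Hasse diagram of `(K, W)`: `β → α` whenever
`α ⋖ β` and `(α, β) ∉ W`, and `α → β` whenever `(α, β) ∈ W`. -/
def HasseEdge {V : Type*} (K : Set (Finset V)) (W : Set (Finset V × Finset V))
    (σ τ : Finset V) : Prop :=
  σ ∈ K ∧ τ ∈ K ∧ ((CodimOneFace τ σ ∧ (τ, σ) ∉ W) ∨ (σ, τ) ∈ W)

lemma nat_cycle_to_vpath {V : Type*} (K : Set (Finset V))
    (W : Set (Finset V × Finset V)) (hW : IsDVF K W) (n : ℕ) (hn : 0 < n)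
    (C : ℕ → Finset V) (hC : ∀ i, HasseEdge K W (C i) (C (i + 1)))
    (hper : ∀ i, C (i + n) = C i) :
    ∃ r : ℕ, 0 < r ∧ ∃ a : Fin (r + 1) → Finset V, ∃ b : Fin r → Finset V,
        IsVPath K W a b ∧ a (Fin.last r) = a 0 := by
  classical
  have hup : ∀ i, (C i, C (i + 1)) ∈ W → (C (i + 1)).card = (C i).card + 1 :=
    fun i h => (hW.1 _ h).2.2.2
  have hdn : ∀ i, (C i, C (i + 1)) ∉ W → (C i).card = (C (i + 1)).card + 1 := by
    intro i h
    rcases (hC i).2.2 with h1 | h1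
    · exact h1.1.2
    · exact absurd h1 h
  have huu : ∀ i, (C i, C (i + 1)) ∈ W → (C (i + 1), C (i + 1 + 1)) ∉ W := by
    intro i h h'
    have h3 := hW.2 (C (i + 1)) (hC i).2.1 (show _ ∈ _ from ⟨h, Or.inr rfl⟩)
      (show _ ∈ _ from ⟨h', Or.inl rfl⟩)
    have h4 : C i = C (i + 1) := congrArg Prod.fst h3
    have := hup i h
    rw [← h4] at this
    omega
  let ψ : ℕ → ℤ := fun i => ((C (i + 1)).card : ℤ) - if (C i, C (i + 1)) ∈ W then 1 else 0
  have hψ : Antitone ψ := by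
    apply antitone_nat_of_succ_le
    intro i
    simp only [ψ]
    by_cases h : (C i, C (i + 1)) ∈ W
    · have h' := huu i h
      have := hdn _ h'
      simp only [h, h', if_true, if_false]
      omega
    · by_cases h' : (C (i + 1), C (i + 1 + 1)) ∈ W
      · have := hup _ h'
        simp only [h, h', if_true, if_false]
        omega
      · have := hdn _ h'
        simp only [h, h', if_false]
        omega
  have hψp : ∀ i, ψ (i + n) = ψ i := by
    intro i
    have : C (i + n + 1) = C (i + 1) := by
      rw [← hper (i + 1)]; congr 1; omega
    simp only [ψ, this, hper]
  have hdd : ∀ i, (C i, C (i + 1)) ∉ W → (C (i + 1), C (i + 1 + 1)) ∈ W := by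
    intro i h
    by_contra h'
    have h1 : ψ (i + n) ≤ ψ (i + 1) := hψ (by omega)
    rw [hψp] at h1
    have := hdn _ h'
    simp only [ψ, h, h', if_false] at h1
    omega
  obtain ⟨s, hs⟩ : ∃ s, (C s, C (s + 1)) ∈ W := by
    by_cases h : (C 0, C (0 + 1)) ∈ W
    · exact ⟨_, h⟩
    · exact ⟨_, hdd _ h⟩
  have hev : ∀ k, (C (s + 2 * k), C (s + 2 * k + 1)) ∈ W := by
    intro k
    induction k with
    | zero => exact hs
    | succ k ih => exact hdd _ (huu _ ih)
  refine ⟨n, hn, fun i => C (s + 2 * i), fun i => C (s + 2 * i + 1),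
    ⟨fun i => (hC _).1, fun i => (hC _).1, ?_⟩, ?_⟩
  · intro i
    have h1 := hev i
    have h2 := huu _ h1
    have e : s + 2 * ((i.succ : Fin (n + 1)) : ℕ) = s + 2 * (i : ℕ) + 1 + 1 := by
      simp only [Fin.val_succ]; omega
    simp only [e, Fin.val_castSucc]
    have h3 := ((hC (s + 2 * (i : ℕ) + 1)).2.2).resolve_right h2
    refine ⟨h1, h3.1, fun h => h3.2 ?_⟩
    rw [h]; exact h1
  · simp only [Fin.val_last, Fin.val_zero]
    rw [show s + 2 * n = s + n + n by omega, hper, hper]; rfl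

/-- Forman, Theorem 6.2: `W` admits a nontrivial closed `V`-path iff
the modified Hasse diagram of `(K, W)` contains a directed cycle of positive length. -/
theorem closedVPath_iff_hasseCycle {V : Type*} (K : Set (Finset V))
    (hK : IsComplex K) (hfin : K.Finite)
    (W : Set (Finset V × Finset V)) (hW : IsDVF K W) :
    (∃ r : ℕ, 0 < r ∧ ∃ a : Fin (r + 1) → Finset V, ∃ b : Fin r → Finset V,
        IsVPath K W a b ∧ a (Fin.last r) = a 0) ↔
    (∃ n : ℕ, 0 < n ∧ ∃ c : Fin (n + 1) → Finset V,
        (∀ i : Fin n, HasseEdge K W (c i.castSucc) (c i.succ)) ∧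
        c (Fin.last n) = c 0) := by
  constructor
  · rintro ⟨r, hr, a, b, ⟨ha, hb, hab⟩, hcl⟩
    refine ⟨2 * r, by omega, fun i => if h : (i : ℕ) % 2 = 0 then a ⟨i / 2, by omega⟩
      else b ⟨i / 2, by omega⟩, ?_, ?_⟩
    · intro i
      have hi := i.isLt
      obtain ⟨h1, h2, h3⟩ := hab ⟨i / 2, by omega⟩
      by_cases h : (i : ℕ) % 2 = 0
      · have h' : ¬ ((i : ℕ) + 1) % 2 = 0 := by omega
        have e : ((i : ℕ) + 1) / 2 = i / 2 := by omega
        simp only [Fin.val_castSucc, Fin.val_succ, h, h', dif_pos, dif_neg, e, not_false_eq_true]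
        exact ⟨ha _, hb _, Or.inr h1⟩
      · have h' : ((i : ℕ) + 1) % 2 = 0 := by omega
        have e : ((i : ℕ) + 1) / 2 = i / 2 + 1 := by omega
        simp only [Fin.val_castSucc, Fin.val_succ, h, h', dif_pos, dif_neg, e, not_false_eq_true]
        refine ⟨hb _, ha _, Or.inl ⟨h2, fun h4 => h3 ?_⟩⟩
        exact congrArg Prod.fst (hW.2 _ (hb ⟨i / 2, by omega⟩)
          (show _ ∈ _ from ⟨h4, Or.inr rfl⟩) (show _ ∈ _ from ⟨h1, Or.inr rfl⟩))
    · have e : 2 * r / 2 = r := by omega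
      simp only [Fin.val_last, Fin.val_zero, Nat.mul_mod_right, Nat.zero_mod, dif_pos, e]
      exact hcl
  · rintro ⟨n, hn, c, hc, hcl⟩
    have hlt : ∀ i, i % n < n := fun i => Nat.mod_lt _ hn
    refine nat_cycle_to_vpath K W hW n hn
      (fun i => c ⟨i % n, (hlt i).trans (Nat.lt_succ_self n)⟩) ?_ ?_
    · intro i
      have h := hc ⟨i % n, hlt i⟩
      have h5 : c (Fin.succ ⟨i % n, hlt i⟩) =
          c ⟨(i + 1) % n, (hlt (i + 1)).trans (Nat.lt_succ_self n)⟩ := by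
        by_cases h1 : i % n + 1 = n
        · have e : (i + 1) % n = 0 := by rw [← Nat.mod_add_mod, h1, Nat.mod_self]
          have e1 : Fin.succ ⟨i % n, hlt i⟩ = Fin.last n := Fin.ext h1
          rw [e1, hcl]
          congr 1
          exact Fin.ext e.symm
        · have h2 := hlt i
          have e : (i + 1) % n = i % n + 1 := by
            rw [← Nat.mod_add_mod, Nat.mod_eq_of_lt (by omega)]
          congr 1
          exact Fin.ext e.symm
      rw [h5] at h
      exact h
    · intro i
      simp only [Nat.add_mod_right]
end

section
/- Let f be a discrete Morse function on a finite nonempty abstract simplicial complex K. Then every simplex at which f attains its minimum value over K is a 0-simplex (a vertex), and every such minimizing vertex is a critical simplex of f. In particular, f has at least one critical vertex. -/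
/-- every simplex at which a discrete Morse function on a finite
nonempty complex attains its minimum over `K` is a vertex, and is critical;
in particular there is at least one critical vertex. -/
theorem min_simplex_is_critical_vertex {V : Type*} (K : Set (Finset V))
    (hK : IsComplex K) (hfin : K.Finite) (hne : K.Nonempty)
    (f : Finset V → ℝ) (hf : IsDiscreteMorse K f) :
    (∀ σ ∈ K, (∀ τ ∈ K, f σ ≤ f τ) → σ.card = 1 ∧ IsCriticalSimplex K f σ) ∧
    (∃ σ ∈ K, σ.card = 1 ∧ IsCriticalSimplex K f σ) := by
  classical
  have key : ∀ σ ∈ K, (∀ τ ∈ K, f σ ≤ f τ) → σ.card = 1 := by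
    intro σ hσ hmin
    by_contra hc
    have hpos := (hK.1 σ hσ).card_pos
    obtain ⟨x, hx, y, hy, hxy⟩ := Finset.one_lt_card.mp (show 1 < σ.card by omega)
    have face : ∀ z ∈ σ, σ.erase z ∈ {a | a ∈ K ∧ CodimOneFace a σ ∧ f σ ≤ f a} := by
      intro z hz
      have hcard := Finset.card_erase_add_one hz
      have hm : σ.erase z ∈ K :=
        hK.2 σ hσ _ (Finset.erase_subset z σ) (Finset.card_pos.mp (by omega))
      exact ⟨hm, ⟨Finset.erase_subset z σ, hcard.symm⟩, hmin _ hm⟩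
    have heq := (hf σ hσ).2 (face x hx) (face y hy)
    have hmem : x ∈ σ.erase y := Finset.mem_erase.mpr ⟨hxy, hx⟩
    rw [← heq] at hmem
    exact Finset.notMem_erase x σ hmem
  have main : ∀ σ ∈ K, (∀ τ ∈ K, f σ ≤ f τ) → σ.card = 1 ∧ IsCriticalSimplex K f σ := by
    intro σ hσ hmin
    have h1 := key σ hσ hmin
    refine ⟨h1, hσ, Set.eq_empty_iff_forall_notMem.mpr ?_,
      Set.eq_empty_iff_forall_notMem.mpr ?_⟩
    · rintro β ⟨hβ, ⟨_, hcard⟩, hle⟩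
      have h2 := key β hβ (fun τ hτ => hle.trans (hmin τ hτ))
      omega
    · rintro a ⟨ha, ⟨_, hcard⟩, _⟩
      have h2 := (hK.1 a ha).card_pos
      omega
  refine ⟨main, ?_⟩
  obtain ⟨σ, hσ, hmin⟩ := Set.exists_min_image K f hfin hne
  exact ⟨σ, hσ, main σ hσ hmin⟩
end

section
/- Let V be a discrete vector field on an abstract simplicial complex K admitting no nontrivial closed V-path. Then in any V-path α_0, β_0, α_1, β_1, …, β_{r−1}, α_r, the simplices α_0, α_1, …, α_r are pairwise distinct. Consequently, on a finite complex every V-path has length bounded by the number of simplices of K. -/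
/-- if `W` admits no nontrivial closed `V`-path, then in any `V`-path
the simplices `α_0, …, α_r` are pairwise distinct; consequently on a finite complex
every `V`-path has length bounded by the number of simplices of `K`. -/
theorem vPath_alphas_injective {V : Type*} (K : Set (Finset V))
    (hK : IsComplex K) (W : Set (Finset V × Finset V)) (hW : IsDVF K W)
    (hnc : NoClosedVPath K W) :
    ∀ r : ℕ, ∀ a : Fin (r + 1) → Finset V, ∀ b : Fin r → Finset V,
      IsVPath K W a b →
        Function.Injective a ∧ ∀ hfin : K.Finite, r + 1 ≤ hfin.toFinset.card := by
  intro r a b h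
  have key : ∀ i j : Fin (r + 1), i < j → a i ≠ a j := by
    rintro ⟨i, hi⟩ ⟨j, hj⟩ hij heq
    have hij' : i < j := hij
    obtain ⟨h1, h2, h3⟩ := h
    refine hnc (j - i) (by omega) (fun k => a ⟨i + k.1, by omega⟩)
      (fun k => b ⟨i + k.1, by omega⟩)
      ⟨fun k => h1 _, fun k => h2 _, fun k => h3 ⟨i + k.1, by omega⟩⟩ ?_
    have e : i + (j - i) = j := by omega
    simp only [Fin.val_last, Fin.val_zero, e, Nat.add_zero]
    exact heq.symm
  have hinj : Function.Injective a := by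
    intro i j hij
    rcases lt_trichotomy i j with hlt | heq | hlt
    · exact absurd hij (key i j hlt)
    · exact heq
    · exact absurd hij.symm (key j i hlt)
  refine ⟨hinj, fun hfin => ?_⟩
  have hc := Finset.card_le_card_of_injOn (s := Finset.univ) (t := hfin.toFinset) a
    (fun i _ => by simpa using h.1 i) hinj.injOn
  simpa using hc
end

section
/- Let V be a gradient vector field (a discrete vector field admitting no nontrivial closed V-path) on a finite abstract simplicial complex K. Then for every vertex x of K there exist a unique r ≥ 0 and unique sequences of vertices x = x_0, x_1, …, x_r and of 1-simplices e_0, …, e_{r−1} such that for each i: ({x_i}, e_i) ∈ V, e_i = {x_i, x_{i+1}} with x_{i+1} ≠ x_i, and the final vertex x_r belongs to no pair of V (i.e., x_r is a critical vertex). In particular, every vertex of K determines a unique critical vertex, the terminus of its descending V-path, so the vertices of K are partitioned into the basins (stable sets) of the critical vertices. -/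
/-- The descending-edge condition on a sequence. -/
def DescPath {V : Type*} [DecidableEq V] (W : Set (Finset V × Finset V)) (r : ℕ)
    (a : Fin (r + 1) → V) (b : Fin r → Finset V) : Prop :=
  ∀ i : Fin r, (({a i.castSucc} : Finset V), b i) ∈ W ∧
    b i = {a i.castSucc, a i.succ} ∧ a i.succ ≠ a i.castSucc

/-- One descending step. -/
def DescStep {V : Type*} [DecidableEq V] (W : Set (Finset V × Finset V)) (x y : V) : Prop :=
  (({x} : Finset V), ({x, y} : Finset V)) ∈ W ∧ y ≠ x

theorem DescPath.cons {V : Type*} [DecidableEq V] {W : Set (Finset V × Finset V)} {r : ℕ}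
    {a : Fin (r + 1) → V} {b : Fin r → Finset V} (h : DescPath W r a b) {x : V}
    (hx : DescStep W x (a 0)) :
    DescPath W (r + 1) (Fin.cons x a : Fin (r + 2) → V)
      (Fin.cons ({x, a 0} : Finset V) b : Fin (r + 1) → Finset V) := by
  intro i
  refine Fin.cases ?_ (fun j => ?_) i
  · exact ⟨by simpa using hx.1, by simp, by simpa using hx.2⟩
  · have := h j
    rw [← Fin.succ_castSucc]
    simpa only [Fin.cons_succ] using this

theorem DescPath.of_transGen {V : Type*} [DecidableEq V] {W : Set (Finset V × Finset V)}
    {x y : V} (h : Relation.TransGen (DescStep W) x y) :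
    ∃ r : ℕ, 0 < r ∧ ∃ (a : Fin (r + 1) → V) (b : Fin r → Finset V),
      DescPath W r a b ∧ a 0 = x ∧ a (Fin.last r) = y := by
  induction h using Relation.TransGen.head_induction_on with
  | @single x h =>
    refine ⟨1, one_pos, Fin.cons x (fun _ => y), Fin.cons {x, y} (fun i => i.elim0), ?_, rfl, rfl⟩
    exact DescPath.cons (r := 0) (a := fun _ => y) (b := fun i => i.elim0) (fun i => i.elim0) h
  | @head x z h _ ih =>
    obtain ⟨r, _, a, b, hp, h0, hl⟩ := ih
    subst h0
    refine ⟨r + 1, Nat.succ_pos _, _, _, hp.cons h, rfl, ?_⟩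
    rw [← Fin.succ_last, Fin.cons_succ, hl]

theorem DescPath.mem {V : Type*} [DecidableEq V] {K : Set (Finset V)}
    (hK : IsComplex K) {W : Set (Finset V × Finset V)} (hW : IsDVF K W) {x y : V}
    (h : DescStep W x y) : ({y} : Finset V) ∈ K :=
  hK.2 _ (hW.1 _ h.1).2.1 _ (by simp) (by simp)

theorem DescPath.irrefl {V : Type*} [DecidableEq V] {K : Set (Finset V)}
    {W : Set (Finset V × Finset V)} (hK : IsComplex K) (hW : IsDVF K W)
    (hnc : NoClosedVPath K W) (x : V) (h : Relation.TransGen (DescStep W) x x) : False := by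
  obtain ⟨r, hr, a, b, hp, h0, hl⟩ := DescPath.of_transGen h
  have hb : ∀ i, b i ∈ K := fun i => (hW.1 _ (hp i).1).2.1
  refine hnc r hr (fun i => {a i}) b ⟨?_, hb, ?_⟩ (by simp [h0, hl])
  · intro i
    refine Fin.lastCases ?_ (fun j => (hW.1 _ (hp j).1).1) i
    show ({a (Fin.last r)} : Finset V) ∈ K
    rw [hl, ← h0]
    exact (hW.1 _ (hp ⟨0, hr⟩).1).1
  · intro i
    obtain ⟨h1, h2, h3⟩ := hp i
    refine ⟨h1, ⟨by simp [h2], ?_⟩, by simpa using h3⟩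
    rw [h2, Finset.card_pair h3.symm, Finset.card_singleton]

theorem DescPath.exists_step {V : Type*} [DecidableEq V] {K : Set (Finset V)}
    {W : Set (Finset V × Finset V)} (hK : IsComplex K) (hW : IsDVF K W) (x : V)
    (h : ¬ ∀ q ∈ W, q.1 ≠ ({x} : Finset V) ∧ q.2 ≠ ({x} : Finset V)) :
    ∃ y, DescStep W x y := by
  push Not at h
  obtain ⟨⟨s, t⟩, hq, hx⟩ := h
  obtain ⟨hs, ht, hst, hc⟩ := hW.1 _ hq
  simp only at hs ht hst hc hx
  by_cases hsx : s = {x}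
  · subst hsx
    rw [Finset.card_singleton] at hc
    obtain ⟨u, v, huv, rfl⟩ := Finset.card_eq_two.1 hc
    have : x = u ∨ x = v := by simpa using hst
    rcases this with rfl | rfl
    · exact ⟨v, hq, huv.symm⟩
    · exact ⟨u, by rwa [Finset.pair_comm], huv⟩
  · have h1 := hx hsx
    have h2 := (hK.1 _ hs).card_pos
    rw [h1, Finset.card_singleton] at hc
    omega

theorem DescPath.exists_path {V : Type*} [DecidableEq V] {K : Set (Finset V)}
    {W : Set (Finset V × Finset V)} (hK : IsComplex K) (hfin : K.Finite) (hW : IsDVF K W)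
    (hnc : NoClosedVPath K W) (x : V) (hx : ({x} : Finset V) ∈ K) :
    ∃ (r : ℕ) (a : Fin (r + 1) → V) (b : Fin r → Finset V), a 0 = x ∧ DescPath W r a b ∧
      ∀ q ∈ W, q.1 ≠ ({a (Fin.last r)} : Finset V) ∧ q.2 ≠ ({a (Fin.last r)} : Finset V) := by
  have : Finite {v : V // ({v} : Finset V) ∈ K} := by
    have := hfin.to_subtype
    refine Finite.of_injective (β := K) (fun v => ⟨{v.1}, v.2⟩) ?_
    intro u v h
    simpa [Subtype.ext_iff] using h
  let T : {v : V // ({v} : Finset V) ∈ K} → {v : V // ({v} : Finset V) ∈ K} → Prop :=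
    fun u v => Relation.TransGen (DescStep W) v.1 u.1
  have i1 : IsTrans _ T := ⟨fun _ _ _ h1 h2 => Relation.TransGen.trans h2 h1⟩
  have i2 : Std.Irrefl T := ⟨fun u h => DescPath.irrefl hK hW hnc u.1 h⟩
  have wf : WellFounded T := Finite.wellFounded_of_trans_of_irrefl T
  suffices H : ∀ u : {v : V // ({v} : Finset V) ∈ K},
      ∃ (r : ℕ) (a : Fin (r + 1) → V) (b : Fin r → Finset V), a 0 = u.1 ∧ DescPath W r a b ∧
      ∀ q ∈ W, q.1 ≠ ({a (Fin.last r)} : Finset V) ∧ q.2 ≠ ({a (Fin.last r)} : Finset V) from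
    H ⟨x, hx⟩
  intro u
  induction u using wf.induction with
  | _ u ih =>
  by_cases hc : ∀ q ∈ W, q.1 ≠ ({u.1} : Finset V) ∧ q.2 ≠ ({u.1} : Finset V)
  · exact ⟨0, fun _ => u.1, fun i => i.elim0, rfl, fun i => i.elim0, hc⟩
  · obtain ⟨y, hy⟩ := DescPath.exists_step hK hW _ hc
    obtain ⟨r, a, b, h0, hp, hl⟩ := ih ⟨y, DescPath.mem hK hW hy⟩ (Relation.TransGen.single hy)
    simp only at h0
    subst h0
    refine ⟨r + 1, _, _, rfl, hp.cons hy, ?_⟩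
    rw [← Fin.succ_last, Fin.cons_succ]
    exact hl

theorem DescPath.unique {V : Type*} [DecidableEq V] {K : Set (Finset V)}
    {W : Set (Finset V × Finset V)} (hW : IsDVF K W) (r : ℕ) :
    ∀ (a : Fin (r + 1) → V) (b : Fin r → Finset V)
      (r' : ℕ) (a' : Fin (r' + 1) → V) (b' : Fin r' → Finset V),
      a 0 = a' 0 → DescPath W r a b → DescPath W r' a' b' →
      (∀ q ∈ W, q.1 ≠ ({a (Fin.last r)} : Finset V)) →
      (∀ q ∈ W, q.1 ≠ ({a' (Fin.last r')} : Finset V)) →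
      (⟨r, a, b⟩ : Σ r : ℕ, (Fin (r + 1) → V) × (Fin r → Finset V)) = ⟨r', a', b'⟩ := by
  induction r with
  | zero =>
    intro a b r' a' b' h0 hp hp' hl hl'
    cases r' with
    | zero =>
      have ha : a = a' := by
        funext i
        rw [Fin.eq_zero i, h0]
      have hb : b = b' := funext fun i => i.elim0
      rw [ha, hb]
    | succ n =>
      refine absurd ?_ (hl _ (hp' 0).1)
      simp only [Fin.castSucc_zero, ← h0]
      rfl
  | succ m ih =>
    intro a b r' a' b' h0 hp hp' hl hl'
    cases r' with
    | zero =>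
      refine absurd ?_ (hl' _ (hp 0).1)
      simp only [Fin.castSucc_zero, h0]
      rfl
    | succ n =>
      have e1 := hp 0
      have e2 := hp' 0
      simp only [Fin.castSucc_zero, ← h0] at e1 e2
      have hb0 : b 0 = b' 0 := congrArg Prod.snd
        (hW.2 _ (hW.1 _ e1.1).1 ⟨e1.1, Or.inl rfl⟩ ⟨e2.1, Or.inl rfl⟩)
      have ha1 : a (Fin.succ 0) = a' (Fin.succ 0) := by
        have h : a (Fin.succ 0) ∈ b' 0 := by rw [← hb0, e1.2.1]; simp
        rw [e2.2.1] at h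
        simp only [Finset.mem_insert, Finset.mem_singleton] at h
        exact h.resolve_left e1.2.2
      have key := ih (Fin.tail a) (Fin.tail b) n (Fin.tail a') (Fin.tail b') ha1
        (fun i => hp i.succ) (fun i => hp' i.succ) hl hl'
      obtain rfl : m = n := congrArg Sigma.fst key
      have key2 := eq_of_heq (Sigma.mk.inj key).2
      have k1 := congrArg Prod.fst key2
      have k2 := congrArg Prod.snd key2
      simp only at k1 k2
      have ha : a = a' := by rw [← Fin.cons_self_tail a, ← Fin.cons_self_tail a', k1, h0]
      have hb : b = b' := by rw [← Fin.cons_self_tail b, ← Fin.cons_self_tail b', k2, hb0]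
      rw [ha, hb]

/-- for a gradient vector field on a finite complex, every vertex `x`
admits a unique descending `V`-path through vertices and `1`-simplices terminating
at a critical vertex. -/
theorem unique_descending_path_to_critical_vertex {V : Type*} [DecidableEq V] (K : Set (Finset V))
    (hK : IsComplex K) (hfin : K.Finite)
    (W : Set (Finset V × Finset V)) (hW : IsDVF K W) (hnc : NoClosedVPath K W) :
    ∀ x : V, ({x} : Finset V) ∈ K →
      ∃! p : Σ r : ℕ, (Fin (r + 1) → V) × (Fin r → Finset V),
        p.2.1 0 = x ∧
        (∀ i : Fin p.1,
          (({p.2.1 i.castSucc} : Finset V), p.2.2 i) ∈ W ∧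
          p.2.2 i = {p.2.1 i.castSucc, p.2.1 i.succ} ∧
          p.2.1 i.succ ≠ p.2.1 i.castSucc) ∧
        (∀ q ∈ W, q.1 ≠ ({p.2.1 (Fin.last p.1)} : Finset V) ∧
          q.2 ≠ ({p.2.1 (Fin.last p.1)} : Finset V)) := by
  intro x hx
  obtain ⟨r, a, b, h0, hp, hl⟩ := DescPath.exists_path hK hfin hW hnc x hx
  refine ⟨⟨r, a, b⟩, ⟨h0, hp, hl⟩, ?_⟩
  rintro ⟨r', a', b'⟩ ⟨h0', hp', hl'⟩
  exact DescPath.unique hW r' a' b' r a b (h0'.trans h0.symm) hp' hp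
    (fun q hq => (hl' q hq).1) (fun q hq => (hl q hq).1)
end

section
/- (King–Knudson–Mramor, via ExtractRaw) Let K be a finite abstract simplicial complex and let h be an injective real-valued function on the vertices of K. Then there exists a gradient vector field V on K (a discrete vector field admitting no nontrivial closed V-path) such that a vertex v belongs to no pair of V if and only if v is a local minimum of h, i.e., h(v) < h(w) for every vertex w with {v, w} ∈ K. In particular, the vertex at which h attains its minimum is critical for V. -/
/-- King–Knudson–Mramor, via ExtractRaw: given an injective function
`h` on the vertices of a finite complex `K`, there is a gradient vector field `W` on
`K` whose critical vertices are exactly the local minima of `h`; in particular the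
vertex at which `h` attains its minimum is critical. -/
theorem extractRaw_gradient_field_exists {V : Type*} [DecidableEq V]
    (K : Set (Finset V)) (hK : IsComplex K) (hfin : K.Finite)
    (h : V → ℝ)
    (hinj : ∀ v w : V, ({v} : Finset V) ∈ K → ({w} : Finset V) ∈ K →
      h v = h w → v = w) :
    ∃ W : Set (Finset V × Finset V), IsDVF K W ∧ NoClosedVPath K W ∧
      (∀ v : V, ({v} : Finset V) ∈ K →
        ((∀ p ∈ W, p.1 ≠ ({v} : Finset V) ∧ p.2 ≠ ({v} : Finset V)) ↔
          (∀ w : V, ({v, w} : Finset V) ∈ K → w ≠ v → h v < h w))) ∧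
      (∀ v : V, ({v} : Finset V) ∈ K →
        (∀ w : V, ({w} : Finset V) ∈ K → h v ≤ h w) →
        (∀ p ∈ W, p.1 ≠ ({v} : Finset V) ∧ p.2 ≠ ({v} : Finset V))) := by
  classical
  let L : V → V → Prop := fun v w => ({v, w} : Finset V) ∈ K ∧ w ≠ v ∧ h w < h v
  have hex : ∃ g : V → V, ∀ v, (∃ w, L v w) → L v (g v) := by
    refine ⟨fun v => if hv : ∃ w, L v w then hv.choose else v, fun v hv => ?_⟩
    simp only [dif_pos hv]
    exact hv.choose_spec
  obtain ⟨g, hg⟩ := hex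
  have hvert : ∀ v w : V, ({v, w} : Finset V) ∈ K →
      ({v} : Finset V) ∈ K ∧ ({w} : Finset V) ∈ K := fun v w hvw =>
    ⟨hK.2 _ hvw _ (by simp) (by simp), hK.2 _ hvw _ (by simp) (by simp)⟩
  let W : Set (Finset V × Finset V) :=
    {p | ∃ v, L v (g v) ∧ p = (({v} : Finset V), ({v, g v} : Finset V))}
  have hcard : ∀ v, L v (g v) → ({v, g v} : Finset V).card = 2 := fun v hv =>
    Finset.card_pair hv.2.1.symm
  have key : ∀ v : V, ({v} : Finset V) ∈ K →
        ((∀ p ∈ W, p.1 ≠ ({v} : Finset V) ∧ p.2 ≠ ({v} : Finset V)) ↔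
          (∀ w : V, ({v, w} : Finset V) ∈ K → w ≠ v → h v < h w)) := by
    intro v hv
    constructor
    · intro hp w hvw hne
      by_contra hlt
      have hle : h w < h v := lt_of_le_of_ne (not_lt.1 hlt)
        (fun he => hne (hinj w v (hvert v w hvw).2 hv he))
      exact (hp _ ⟨v, hg v ⟨w, hvw, hne, hle⟩, rfl⟩).1 rfl
    · rintro hmin p ⟨u, hu, rfl⟩
      refine ⟨fun he => ?_, fun he => ?_⟩
      · have : u = v := by simpa using he
        subst this
        exact absurd (hmin _ hu.1 hu.2.1) (not_lt.2 hu.2.2.le)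
      · have h2 := hcard u hu
        have he' : ({u, g u} : Finset V) = {v} := he
        rw [he'] at h2
        simp at h2
  refine ⟨W, ⟨?_, ?_⟩, ?_, key, ?_⟩
  · rintro p ⟨v, hv, rfl⟩
    refine ⟨(hvert _ _ hv.1).1, hv.1, by simp, ?_⟩
    simpa using hcard v hv
  · rintro σ - p ⟨⟨v, hv, rfl⟩, hp⟩ q ⟨⟨u, hu, rfl⟩, hq⟩
    have c1 := hcard v hv
    have c2 := hcard u hu
    suffices hvu : v = u by rw [hvu]
    rcases hp with hp | hp <;> rcases hq with hq | hq <;> simp only at hp hq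
    · rw [← hq] at hp
      simpa using hp
    · rw [hq, ← hp] at c2
      simp at c2
    · rw [hp, ← hq] at c1
      simp at c1
    · have he : ({v, g v} : Finset V) = {u, g u} := hp.trans hq.symm
      have m1 : v ∈ ({u, g u} : Finset V) := by rw [← he]; simp
      have m2 : u ∈ ({v, g v} : Finset V) := by rw [he]; simp
      simp only [Finset.mem_insert, Finset.mem_singleton] at m1 m2
      rcases m1 with m1 | m1
      · exact m1
      · rcases m2 with m2 | m2
        · exact m2.symm
        · have l1 := hv.2.2
          have l2 := hu.2.2
          rw [← m2] at l1
          rw [← m1] at l2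
          exact absurd l1 (not_lt.2 l2.le)
  · intro r hr a b hab heq
    have hanti : StrictAnti (fun i => ∑ x ∈ a i, h x) := by
      rw [Fin.strictAnti_iff_succ_lt]
      intro i
      obtain ⟨⟨v, hv, hp⟩, hface, hne⟩ := hab.2.2 i
      obtain ⟨ha, hb⟩ := Prod.mk.inj hp
      obtain ⟨hsub, hc⟩ := hface
      rw [hb] at hsub hc
      rw [hcard v hv] at hc
      obtain ⟨x, hx⟩ := Finset.card_eq_one.1 (show (a i.succ).card = 1 by omega)
      rw [ha, hx] at hne
      rw [hx] at hsub
      have hxm : x = v ∨ x = g v := by simpa using hsub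
      have hxg : x = g v := hxm.resolve_left (fun e => hne (by rw [e]))
      simp only [ha, hx, Finset.sum_singleton, hxg]
      exact hv.2.2
    have hlt := hanti (show (0 : Fin (r + 1)) < Fin.last r from Fin.lt_def.2 (by simpa using hr))
    simp only [heq, lt_irrefl] at hlt
  · intro v hv hmin
    refine (key v hv).2 fun w hvw hne => ?_
    have hw := (hvert v w hvw).2
    exact lt_of_le_of_ne (hmin w hw) (fun he => hne (hinj v w hv hw he).symm)
end

section
/- Let f be a discrete Morse function on a finite abstract simplicial complex K and let V_f = {(α, β) : α ⋖ β and f(β) ≤ f(α)} be its gradient vector field. Then the modified Hasse diagram of (K, V_f) contains no nontrivial closed directed path (no directed cycle of positive length). -/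
/-- the modified Hasse diagram of the gradient vector field of a
discrete Morse function on a finite complex contains no directed cycle of positive
length. -/
theorem hasse_of_gradVF_acyclic {V : Type*} (K : Set (Finset V))
    (hK : IsComplex K) (hfin : K.Finite)
    (f : Finset V → ℝ) (hf : IsDiscreteMorse K f) :
    ¬ ∃ n : ℕ, 0 < n ∧ ∃ c : Fin (n + 1) → Finset V,
        (∀ i : Fin n, HasseEdge K (gradVF K f) (c i.castSucc) (c i.succ)) ∧
        c (Fin.last n) = c 0 := by
  rintro ⟨n, hn, c, hc, hcl⟩
  have step : ∀ i : Fin n, f (c i.succ) ≤ f (c i.castSucc) ∧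
      (f (c i.succ) = f (c i.castSucc) → (c i.castSucc).card < (c i.succ).card) := by
    intro i
    obtain ⟨h1, h2, h | h⟩ := hc i
    · have hlt : f (c i.succ) < f (c i.castSucc) := by
        by_contra hle
        exact h.2 ⟨h2, h1, h.1, not_lt.mp hle⟩
      exact ⟨hlt.le, fun he => absurd he hlt.ne⟩
    · obtain ⟨_, _, h3, h4⟩ := h
      have h5 := h3.2
      exact ⟨h4, fun _ => by simp only at h5; omega⟩
  have anti : ∀ j : Fin (n + 1), f (c j) ≤ f (c 0) ∧
      (f (c j) = f (c 0) → (c 0).card + j.val ≤ (c j).card) := by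
    intro j
    induction j using Fin.induction with
    | zero => simp
    | succ i ih =>
      obtain ⟨s1, s2⟩ := step i
      refine ⟨s1.trans ih.1, fun he => ?_⟩
      have e1 : f (c i.castSucc) = f (c 0) := le_antisymm ih.1 (he ▸ s1)
      have h1 := ih.2 e1
      have h2 := s2 (he.trans e1.symm)
      simp only [Fin.val_castSucc, Fin.val_succ] at *
      omega
  have h := (anti (Fin.last n)).2 (by rw [hcl])
  rw [hcl, Fin.val_last] at h
  omega
end
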